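/- The quasi-consecutive patterns 2̲1̲3̲4 and 1̲3̲2̲4 are des-Wilf-equivalent: for all n ≥ 1 and k ≥ 0, the number of permutations of length n avoiding 2̲1̲3̲4 with exactly k descents equals the number of permutations of length n avoiding 1̲3̲2̲4 with exactly k descents. -/

import Mathlib

open scoped Classical

/-- The number of descents of a permutation of `Fin n` (one-line notation `π 0, π 1, …`). -/
def des {n : ℕ} (π : Equiv.Perm (Fin n)) : ℕ :=
  (Finset.univ.filter fun i : Fin n =>
    ∃ h : (i : ℕ) + 1 < n, π ⟨(i : ℕ) + 1, h⟩ < π i).card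

/-- `π` avoids the quasi-consecutive pattern 2̲1̲3̲4: there are no (0-indexed) positions
`i` and `j` with `i + 3 ≤ j < n` such that π_{i+1} < π_i < π_{i+2} < π_j. -/
def AvoidsA {n : ℕ} (π : Equiv.Perm (Fin n)) : Prop :=
  ¬ ∃ (i j : ℕ) (hj : j < n) (hij : i + 3 ≤ j), π ⟨i + 1, by omega⟩ < π ⟨i, by omega⟩ ∧ π ⟨i, by omega⟩ < π ⟨i + 2, by omega⟩ ∧ π ⟨i + 2, by omega⟩ < π ⟨j, hj⟩

/-- `π` avoids the quasi-consecutive pattern 1̲3̲2̲4: there are no (0-indexed) positions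
`i` and `j` with `i + 3 ≤ j < n` such that π_i < π_{i+2} < π_{i+1} < π_j. -/
def AvoidsB {n : ℕ} (π : Equiv.Perm (Fin n)) : Prop :=
  ¬ ∃ (i j : ℕ) (hj : j < n) (hij : i + 3 ≤ j), π ⟨i, by omega⟩ < π ⟨i + 2, by omega⟩ ∧ π ⟨i + 2, by omega⟩ < π ⟨i + 1, by omega⟩ ∧ π ⟨i + 1, by omega⟩ < π ⟨j, hj⟩

section helpers
variable {α : Type*} [LinearOrder α]

/-- Occurrence of a quasi-consecutive pattern: a window satisfying `P`, followed later by a larger entry. -/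
def QOcc (P : α → α → α → Prop) : List α → Prop
  | a :: b :: c :: Q => (P a b c ∧ ∃ d ∈ Q, a < d ∧ b < d ∧ c < d) ∨ QOcc P (b :: c :: Q)
  | _ => False

/-- Occurrence of a consecutive pattern of length three. -/
def COcc (P : α → α → α → Prop) : List α → Prop
  | a :: b :: c :: Q => P a b c ∨ COcc P (b :: c :: Q)
  | _ => False

/-- Number of adjacent pairs satisfying `r`. -/
noncomputable def cnt (r : α → α → Prop) : List α → ℕ
  | a :: b :: Q => (if r a b then 1 else 0) + cnt r (b :: Q)
  | _ => 0

theorem QOcc_append_cons (P : α → α → α → Prop) (m : α) (R : List α) (hR : ∀ x ∈ R, x < m) :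
    ∀ L : List α, (∀ x ∈ L, x < m) → (QOcc P (L ++ m :: R) ↔ COcc P L ∨ QOcc P R) := by
  have h0 : QOcc P (m :: R) ↔ QOcc P R := by
    rcases R with _ | ⟨b, _ | ⟨c, Q⟩⟩
    · simp [QOcc]
    · simp [QOcc]
    · simp only [QOcc, or_iff_right_iff_imp]
      rintro ⟨_, d, hd, h1, _⟩
      exact absurd h1 (not_lt.2 (hR d (by simp [hd])).le)
  intro L
  induction L with
  | nil => intro _; simpa [COcc] using h0
  | cons x t ih =>
    intro hL
    have ih' := ih (fun y hy => hL y (by simp [hy]))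
    rcases t with _ | ⟨y, _ | ⟨z, t⟩⟩
    · rcases R with _ | ⟨b, Q⟩
      · simp [QOcc, COcc]
      · simp only [List.cons_append, List.nil_append, QOcc, COcc, false_or] at ih' ⊢
        rw [h0]
        constructor
        · rintro (⟨_, d, hd, _, h1, _⟩ | h)
          · exact absurd h1 (not_lt.2 (hR d (by simp [hd])).le)
          · exact h
        · exact Or.inr
    · simp only [List.cons_append, List.nil_append, QOcc, COcc, false_or] at ih' ⊢
      rw [ih']
      constructor
      · rintro (⟨_, d, hd, _, _, h1⟩ | h)
        · exact absurd h1 (not_lt.2 (hR d (by simp [hd])).le)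
        · exact h
      · exact Or.inr
    · simp only [List.cons_append, QOcc, COcc] at ih' ⊢
      rw [ih', or_assoc]
      constructor
      · rintro (⟨h, _⟩ | h)
        · exact Or.inl h
        · exact Or.inr h
      · rintro (h | h)
        · exact Or.inl ⟨h, m, by simp, hL _ (by simp), hL _ (by simp), hL _ (by simp)⟩
        · exact Or.inr h

theorem COcc_iff (P : α → α → α → Prop) (l : List α) :
    COcc P l ↔ ∃ a b c, [a, b, c] <:+: l ∧ P a b c := by
  induction l with
  | nil => simp [COcc]
  | cons x t ih =>
    rcases t with _ | ⟨y, _ | ⟨z, t⟩⟩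
    · simp only [COcc, false_iff]
      rintro ⟨a, b, c, h, _⟩
      simpa using h.length_le
    · simp only [COcc, false_iff]
      rintro ⟨a, b, c, h, _⟩
      simpa using h.length_le
    · simp only [COcc]
      rw [ih]
      constructor
      · rintro (h | ⟨a, b, c, h, hp⟩)
        · exact ⟨x, y, z, ⟨[], t, by simp⟩, h⟩
        · exact ⟨a, b, c, List.infix_cons h, hp⟩
      · rintro ⟨a, b, c, h, hp⟩
        rcases List.infix_cons_iff.1 h with h | h
        · left
          obtain ⟨s, hs⟩ := h
          simp at hs
          obtain ⟨rfl, rfl, rfl, _⟩ := hs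
          exact hp
        · exact Or.inr ⟨a, b, c, h, hp⟩

theorem COcc_reverse (P : α → α → α → Prop) (l : List α) :
    COcc P l.reverse ↔ COcc (fun a b c => P c b a) l := by
  rw [COcc_iff, COcc_iff]
  constructor
  · rintro ⟨a, b, c, h, hp⟩
    exact ⟨c, b, a, by rw [← List.reverse_infix]; simpa using h, hp⟩
  · rintro ⟨a, b, c, h, hp⟩
    exact ⟨c, b, a, by rw [← List.reverse_infix]; simpa using h, hp⟩

theorem COcc_map (P P' : α → α → α → Prop) (f : α → α) (l : List α)
    (h : ∀ a ∈ l, ∀ b ∈ l, ∀ c ∈ l, P (f a) (f b) (f c) ↔ P' a b c) :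
    COcc P (l.map f) ↔ COcc P' l := by
  induction l with
  | nil => simp [COcc]
  | cons x t ih =>
    have ih' := ih (fun a ha b hb c hc => h a (by simp [ha]) b (by simp [hb]) c (by simp [hc]))
    rcases t with _ | ⟨y, _ | ⟨z, t⟩⟩
    · simp [COcc]
    · simp [COcc]
    · simp only [List.map_cons, COcc] at ih' ⊢
      rw [ih', h x (by simp) y (by simp) z (by simp)]

theorem cnt_snoc (r : α → α → Prop) (a b : α) (l : List α) :
    cnt r (l ++ [a, b]) = cnt r (l ++ [a]) + if r a b then 1 else 0 := by
  induction l with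
  | nil => simp [cnt]
  | cons x t ih =>
    rcases t with _ | ⟨y, t⟩
    · simp [cnt]
    · simp only [List.cons_append, cnt] at ih ⊢
      rw [ih, add_assoc]

theorem cnt_reverse (r : α → α → Prop) (l : List α) :
    cnt r l.reverse = cnt (fun a b => r b a) l := by
  induction l with
  | nil => simp [cnt]
  | cons x t ih =>
    rcases t with _ | ⟨y, t⟩
    · simp [cnt]
    · simp only [List.reverse_cons, List.append_assoc, List.cons_append, List.nil_append, cnt]
        at ih ⊢
      rw [cnt_snoc, ih, add_comm]

theorem cnt_map (r r' : α → α → Prop) (f : α → α) (l : List α)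
    (h : ∀ a ∈ l, ∀ b ∈ l, r (f a) (f b) ↔ r' a b) :
    cnt r (l.map f) = cnt r' l := by
  induction l with
  | nil => simp [cnt]
  | cons x t ih =>
    have ih' := ih (fun a ha b hb => h a (by simp [ha]) b (by simp [hb]))
    rcases t with _ | ⟨y, t⟩
    · simp [cnt]
    · simp only [List.map_cons, cnt] at ih' ⊢
      rw [ih']
      simp only [h x (by simp) y (by simp)]

theorem cnt_append_cons (m : α) (R : List α) (hR : ∀ x ∈ R, x < m) (L : List α)
    (hL : ∀ x ∈ L, x < m) :
    cnt (fun a b : α => b < a) (L ++ m :: R) =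
      cnt (fun a b : α => b < a) L + ((if R.length = 0 then 0 else 1) + cnt (fun a b : α => b < a) R) := by
  induction L with
  | nil =>
    rcases R with _ | ⟨b, Q⟩
    · simp [cnt]
    · simp [cnt, hR b]
  | cons x t ih =>
    have ih' := ih (fun y hy => hL y (by simp [hy]))
    rcases t with _ | ⟨y, t⟩
    · simp only [List.cons_append, List.nil_append, cnt] at ih' ⊢
      rw [ih', if_neg (not_lt.2 (hL x (by simp)).le)]
      simp
    · simp only [List.cons_append, cnt] at ih' ⊢
      rw [ih', add_assoc]

/-- The order-reversing involution of a finite set. -/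
noncomputable def cpl (S : Finset α) (x : α) : α :=
  if h : x ∈ S then (S.orderIsoOfFin rfl (((S.orderIsoOfFin rfl).symm ⟨x, h⟩).rev) : α) else x

theorem cpl_mem {S : Finset α} {x : α} (h : x ∈ S) : cpl S x ∈ S := by
  rw [cpl, dif_pos h]
  exact Subtype.property _

theorem cpl_cpl {S : Finset α} {x : α} (h : x ∈ S) : cpl S (cpl S x) = x := by
  have h2 := cpl_mem h
  rw [cpl, dif_pos h2]
  have : (⟨cpl S x, h2⟩ : S) = S.orderIsoOfFin rfl (((S.orderIsoOfFin rfl).symm ⟨x, h⟩).rev) := by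
    apply Subtype.ext
    simp [cpl, dif_pos h]
  rw [this]
  simp

theorem cpl_lt {S : Finset α} {x y : α} (hx : x ∈ S) (hy : y ∈ S) :
    cpl S x < cpl S y ↔ y < x := by
  rw [cpl, dif_pos hx, cpl, dif_pos hy]
  rw [Subtype.coe_lt_coe, OrderIso.lt_iff_lt, Fin.rev_lt_rev, OrderIso.lt_iff_lt]
  exact Iff.rfl

/-- Reverse-complement of a word, relative to its own set of letters. -/
noncomputable def rc (L : List α) : List α := (L.map (cpl L.toFinset)).reverse

theorem mem_rc {L : List α} {x : α} : x ∈ rc L ↔ x ∈ L := by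
  simp only [rc, List.mem_reverse, List.mem_map]
  constructor
  · rintro ⟨a, ha, rfl⟩
    simpa using cpl_mem (S := L.toFinset) (x := a) (by simpa using ha)
  · intro h
    have h' : x ∈ L.toFinset := by simpa using h
    exact ⟨cpl L.toFinset x, by simpa using cpl_mem h', cpl_cpl h'⟩

theorem rc_rc (L : List α) : rc (rc L) = L := by
  have h : (rc L).toFinset = L.toFinset := by
    ext x; simp [mem_rc]
  rw [rc, h, rc, List.map_reverse, List.reverse_reverse, List.map_map]
  conv_rhs => rw [← List.map_id L]
  apply List.map_congr_left
  intro a ha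
  exact cpl_cpl (by simpa using ha)

theorem rc_length (L : List α) : (rc L).length = L.length := by simp [rc]

theorem rc_nodup {L : List α} (h : L.Nodup) : (rc L).Nodup := by
  rw [rc, List.nodup_reverse]
  refine List.Nodup.map_on ?_ h
  intro x hx y hy hxy
  rw [← cpl_cpl (S := L.toFinset) (x := x) (by simpa using hx), hxy, cpl_cpl (by simpa using hy)]

theorem rc_cnt (L : List α) :
    cnt (fun a b : α => b < a) (rc L) = cnt (fun a b : α => b < a) L := by
  rw [rc, cnt_reverse]
  apply cnt_map
  intro a ha b hb
  exact cpl_lt (by simpa using ha) (by simpa using hb)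

def PA (a b c : α) : Prop := b < a ∧ a < c
def PB (a b c : α) : Prop := a < c ∧ c < b

theorem rc_COcc (L : List α) : COcc PB (rc L) ↔ COcc PA L := by
  rw [rc, COcc_reverse]
  apply COcc_map
  intro a ha b hb c hc
  have ha : a ∈ L.toFinset := by simpa using ha
  have hb : b ∈ L.toFinset := by simpa using hb
  have hc : c ∈ L.toFinset := by simpa using hc
  simp only [PA, PB, cpl_lt ha hb, cpl_lt hc ha]
  tauto

/-- The graph of the bijection: reverse-complement each block between right-to-left maxima. -/
inductive BRel : List α → List α → Prop
  | nil : BRel [] []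
  | step (L : List α) (m : α) (R R' : List α) (hL : ∀ x ∈ L, x < m) (hR : ∀ x ∈ R, x < m)
      (h : BRel R R') : BRel (L ++ m :: R) (rc L ++ m :: R')

theorem BRel.mem {l l' : List α} (h : BRel l l') : ∀ x, x ∈ l' ↔ x ∈ l := by
  induction h with
  | nil => simp
  | step L m R R' hL hR h ih => intro x; simp [mem_rc, ih]

theorem BRel.length {l l' : List α} (h : BRel l l') : l'.length = l.length := by
  induction h with
  | nil => simp
  | step L m R R' hL hR h ih => simp [rc_length, ih]

theorem BRel.symm {l l' : List α} (h : BRel l l') : BRel l' l := by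
  induction h with
  | nil => exact BRel.nil
  | step L m R R' hL hR h ih =>
    have := BRel.step (rc L) m R' R (fun x hx => hL x (mem_rc.1 hx))
      (fun x hx => hR x ((h.mem x).1 hx)) ih
    rwa [rc_rc] at this

theorem BRel.nodup {l l' : List α} (h : BRel l l') (hl : l.Nodup) : l'.Nodup := by
  induction h with
  | nil => simp
  | step L m R R' hL hR h ih =>
    rw [List.nodup_append, List.nodup_cons] at hl ⊢
    obtain ⟨h1, ⟨h2, h3⟩, h4⟩ := hl
    refine ⟨rc_nodup h1, ⟨by rwa [h.mem], ih h3⟩, ?_⟩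
    intro a ha b hb
    refine h4 a (mem_rc.1 ha) b ?_
    simpa [h.mem] using hb

theorem BRel.cnt_eq {l l' : List α} (h : BRel l l') :
    cnt (fun a b : α => b < a) l' = cnt (fun a b : α => b < a) l := by
  induction h with
  | nil => rfl
  | step L m R R' hL hR h ih =>
    rw [cnt_append_cons m R hR L hL, cnt_append_cons m R' (fun x hx => hR x ((h.mem x).1 hx)) _
      (fun x hx => hL x (mem_rc.1 hx)), ih, rc_cnt, h.length]

theorem BRel.occ {l l' : List α} (h : BRel l l') : QOcc PA l ↔ QOcc PB l' := by
  induction h with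
  | nil => simp [QOcc]
  | step L m R R' hL hR h ih =>
    rw [QOcc_append_cons _ m R hR L hL, QOcc_append_cons _ m R'
      (fun x hx => hR x ((h.mem x).1 hx)) _ (fun x hx => hL x (mem_rc.1 hx)), ih, rc_COcc]

theorem BRel.total (N : ℕ) : ∀ l : List α, l.length ≤ N → l.Nodup → ∃ l', BRel l l' := by
  induction N with
  | zero =>
    intro l hl _
    have : l = [] := List.length_eq_zero_iff.1 (by omega)
    subst this
    exact ⟨_, BRel.nil⟩
  | succ N ih =>
    intro l hl hn
    by_cases h0 : l = []
    · subst h0; exact ⟨_, BRel.nil⟩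
    · obtain ⟨m, hm, hmax⟩ := l.toFinset.exists_max_image id
        (by simpa [List.toFinset_nonempty_iff] using h0)
      obtain ⟨L, R, rfl⟩ := List.append_of_mem (by simpa using hm : m ∈ l)
      rw [List.nodup_append, List.nodup_cons] at hn
      obtain ⟨h1, ⟨h2, h3⟩, h4⟩ := hn
      obtain ⟨R', hR'⟩ := ih R (by simp at hl; omega) h3
      refine ⟨_, BRel.step L m R R' ?_ ?_ hR'⟩
      · intro x hx
        exact lt_of_le_of_ne (hmax x (by simp [hx])) (h4 x hx m (by simp))
      · intro x hx
        refine lt_of_le_of_ne (hmax x (by simp [hx])) ?_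
        rintro rfl
        exact h2 hx

theorem decomp_unique {L L' R R' : List α} {m m' : α} (hL : ∀ x ∈ L, x < m) (hR : ∀ x ∈ R, x < m)
    (hL' : ∀ x ∈ L', x < m') (hR' : ∀ x ∈ R', x < m') (h : L ++ m :: R = L' ++ m' :: R') :
    L = L' ∧ m = m' ∧ R = R' := by
  have key : ∀ {L R : List α} {m : α}, (∀ x ∈ L, x < m) → (∀ x ∈ R, x < m) →
      ∀ x ∈ L ++ m :: R, x ≤ m := by
    intro L R m hL hR x hx
    simp only [List.mem_append, List.mem_cons] at hx
    rcases hx with hx | rfl | hx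
    · exact (hL x hx).le
    · exact le_rfl
    · exact (hR x hx).le
  have h1 : m ≤ m' := key hL' hR' m (by rw [← h]; simp)
  have h2 : m' ≤ m := key hL hR m' (by rw [h]; simp)
  obtain rfl : m = m' := le_antisymm h1 h2
  clear key h1 h2
  induction L generalizing L' with
  | nil =>
    rcases L' with _ | ⟨y, t⟩
    · simpa using h
    · simp only [List.nil_append, List.cons_append, List.cons.injEq] at h
      exact absurd (hL' y (by simp)) (by simp [h.1])
  | cons x s ih =>
    rcases L' with _ | ⟨y, t⟩
    · simp only [List.nil_append, List.cons_append, List.cons.injEq] at h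
      exact absurd (hL x (by simp)) (by simp [h.1])
    · simp only [List.cons_append, List.cons.injEq] at h
      have := ih (fun z hz => hL z (by simp [hz])) (fun z hz => hL' z (by simp [hz])) h.2
      exact ⟨by rw [h.1, this.1], rfl, this.2.2⟩

theorem BRel.unique {l l1 l2 : List α} (h1 : BRel l l1) (h2 : BRel l l2) : l1 = l2 := by
  induction h1 generalizing l2 with
  | nil =>
    generalize he : ([] : List α) = l at h2
    cases h2 with
    | nil => rfl
    | step => simp at he
  | step L m R R' hL hR h ih =>
    generalize he : L ++ m :: R = l at h2
    cases h2 with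
    | nil => simp at he
    | step L2 m2 R2 R2' hL2 hR2 hh =>
      obtain ⟨rfl, rfl, rfl⟩ := decomp_unique hL hR hL2 hR2 he
      rw [ih hh]

theorem QOcc_iff (P : α → α → α → Prop) (l : List α) :
    QOcc P l ↔ ∃ (i j : ℕ) (hj : j < l.length) (hij : i + 3 ≤ j),
      P l[i] l[i+1] l[i+2] ∧ l[i] < l[j] ∧ l[i+1] < l[j] ∧ l[i+2] < l[j] := by
  induction l with
  | nil => simp [QOcc]
  | cons x t ih =>
    rcases t with _ | ⟨y, _ | ⟨z, t⟩⟩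
    · simp only [QOcc, false_iff]
      rintro ⟨i, j, hj, hij, _⟩
      simp at hj; omega
    · simp only [QOcc, false_iff]
      rintro ⟨i, j, hj, hij, _⟩
      simp at hj; omega
    · simp only [QOcc]
      rw [ih]
      constructor
      · rintro (⟨hp, d, hd, h⟩ | ⟨i, j, hj, hij, h⟩)
        · obtain ⟨j, hj, rfl⟩ := List.getElem_of_mem hd
          exact ⟨0, j + 3, by simpa using hj, by omega, hp, h⟩
        · exact ⟨i + 1, j + 1, by simpa using hj, by omega, h⟩
      · rintro ⟨i, j, hj, hij, h⟩
        rcases i with _ | i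
        · left
          obtain ⟨j, rfl⟩ : ∃ j', j = j' + 3 := ⟨j - 3, by omega⟩
          exact ⟨h.1, t[j]'(by simpa using hj), List.getElem_mem _, h.2⟩
        · right
          obtain ⟨j, rfl⟩ : ∃ j', j = j' + 1 := ⟨j - 1, by omega⟩
          exact ⟨i, j, by simpa using hj, by omega, h⟩

theorem cnt_eq_sum (r : α → α → Prop) (l : List α) (N : ℕ) (hN : l.length = N) :
    cnt r l = ∑ i ∈ Finset.range N,
      if ∃ h : i + 1 < l.length, r l[i] l[i+1] then 1 else 0 := by
  induction l generalizing N with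
  | nil => subst hN; simp [cnt]
  | cons x t ih =>
    rcases t with _ | ⟨y, t⟩
    · subst hN; simp [cnt]
    · obtain ⟨M, rfl⟩ : ∃ M, N = M + 1 := ⟨t.length + 1, by simpa using hN.symm⟩
      rw [Finset.sum_range_succ', cnt, ih M (by simpa using hN), add_comm]
      congr 1
      · apply Finset.sum_congr rfl
        intro i _
        simp
      · simp

end helpers

theorem avoidsA_iff {n : ℕ} (π : Equiv.Perm (Fin n)) :
    AvoidsA π ↔ ¬ QOcc PA (List.ofFn π) := by
  rw [AvoidsA, QOcc_iff, not_iff_not]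
  constructor
  · rintro ⟨i, j, hj, hij, h1, h2, h3⟩
    refine ⟨i, j, by simpa using hj, hij, ?_⟩
    simp only [List.getElem_ofFn, PA]
    exact ⟨⟨h1, h2⟩, h2.trans h3, (h1.trans h2).trans h3, h3⟩
  · rintro ⟨i, j, hj, hij, h⟩
    simp only [List.getElem_ofFn, PA] at h
    exact ⟨i, j, by simpa using hj, hij, h.1.1, h.1.2, h.2.2.2⟩

theorem avoidsB_iff {n : ℕ} (π : Equiv.Perm (Fin n)) :
    AvoidsB π ↔ ¬ QOcc PB (List.ofFn π) := by
  rw [AvoidsB, QOcc_iff, not_iff_not]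
  constructor
  · rintro ⟨i, j, hj, hij, h1, h2, h3⟩
    refine ⟨i, j, by simpa using hj, hij, ?_⟩
    simp only [List.getElem_ofFn, PB]
    exact ⟨⟨h1, h2⟩, (h1.trans h2).trans h3, h3, h2.trans h3⟩
  · rintro ⟨i, j, hj, hij, h⟩
    simp only [List.getElem_ofFn, PB] at h
    exact ⟨i, j, by simpa using hj, hij, h.1.1, h.1.2, h.2.2.1⟩

theorem des_eq {n : ℕ} (π : Equiv.Perm (Fin n)) :
    des π = cnt (fun a b : Fin n => b < a) (List.ofFn π) := by
  rw [cnt_eq_sum _ _ n (List.length_ofFn), des, Finset.card_filter, Finset.sum_range]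
  apply Finset.sum_congr rfl
  intro i _
  simp

theorem exists_perm {n : ℕ} (l : List (Fin n)) (hl : l.length = n) (hn : l.Nodup) :
    ∃ π : Equiv.Perm (Fin n), List.ofFn π = l := by
  have hinj : Function.Injective (fun i : Fin n => l[(i : ℕ)]'(by omega)) := by
    intro i j hij
    exact Fin.ext ((hn.getElem_inj_iff).1 hij)
  refine ⟨Equiv.ofBijective _ (Finite.injective_iff_bijective.1 hinj), ?_⟩
  apply List.ext_getElem
  · simp [hl]
  · intro i h1 h2
    simp

theorem exists_image {n : ℕ} (π : Equiv.Perm (Fin n)) :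
    ∃ σ : Equiv.Perm (Fin n), BRel (List.ofFn π) (List.ofFn σ) := by
  have hn : (List.ofFn π).Nodup := List.nodup_ofFn.2 π.injective
  obtain ⟨l', h⟩ := BRel.total _ (List.ofFn π) le_rfl hn
  obtain ⟨σ, hσ⟩ := exists_perm l' (by rw [h.length, List.length_ofFn]) (h.nodup hn)
  exact ⟨σ, hσ ▸ h⟩

/-- The quasi-consecutive patterns 2̲1̲3̲4 and 1̲3̲2̲4 are des-Wilf-equivalent. -/
theorem statement15 (n : ℕ) (hn : 1 ≤ n) (k : ℕ) :
    Nat.card {π : Equiv.Perm (Fin n) // AvoidsA π ∧ des π = k} =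
      Nat.card {π : Equiv.Perm (Fin n) // AvoidsB π ∧ des π = k} := by
  choose Φ hΦ using @exists_image n
  have hinv : Function.Involutive Φ := by
    intro π
    have := (hΦ (Φ π)).unique (hΦ π).symm
    exact Equiv.coe_fn_injective (List.ofFn_injective this)
  refine Nat.card_congr (Equiv.subtypeEquiv (hinv.toPerm Φ) ?_)
  intro π
  rw [avoidsA_iff, avoidsB_iff, des_eq, des_eq, Function.Involutive.coe_toPerm, (hΦ π).occ,
    (hΦ π).cnt_eq]
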